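/- With G_{0,∞}(x,x';β) = (2πβ)^{-3/2} exp(−|x−x'|²/(2β)), G_{0,L}(x,x';β) = Π_{j=1}³ g_{0,L}(x_j,x'_j;β) the method-of-images cube heat kernel, and Z_{0,L} = G_{0,L} − G_{0,∞}: there exist numerical constants c₁, c₂ > 0 such that for all L ≥ 1, β > 0, x, x' ∈ (−L/2, L/2)³ and all j, k ∈ {1,2,3}, both |∂Z_{0,L}/∂β (x, x'; β)| and |∂²Z_{0,L}/∂x_j ∂x'_k (x, x'; β)| are bounded by c₁ (1+β) β^{-1} G_{0,∞}(x, x'; c₂ β). -/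

import Mathlib

open Real

/-- The one-dimensional Dirichlet method-of-images heat kernel on `(−L/2, L/2)`. -/
noncomputable def g0L (L x x' β : ℝ) : ℝ :=
  (2 * π * β) ^ (-(1/2) : ℝ) *
    ∑' m : ℤ, (Real.exp (-(x - x' + 2 * m * L) ^ 2 / (2 * β)) -
      Real.exp (-(x + x' - 2 * m * L - L) ^ 2 / (2 * β)))

/-- The free heat kernel on `ℝ³`. -/
noncomputable def G0inf (x x' : Fin 3 → ℝ) (β : ℝ) : ℝ :=
  (2 * π * β) ^ (-(3/2) : ℝ) * Real.exp (-(∑ j, (x j - x' j) ^ 2) / (2 * β))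

/-- The Dirichlet heat kernel of the cube `(−L/2, L/2)³`. -/
noncomputable def G0L (L : ℝ) (x x' : Fin 3 → ℝ) (β : ℝ) : ℝ :=
  ∏ j, g0L L (x j) (x' j) β

/-- The boundary remainder `Z_{0,L} = G_{0,L} − G_{0,∞}`. -/
noncomputable def Z0L (L : ℝ) (x x' : Fin 3 → ℝ) (β : ℝ) : ℝ :=
  G0L L x x' β - G0inf x x' β

/-!
By the method of images, `g_{0,L}(x, y; β)` is the difference of the values at `x - y` and
`x + y - L` of the `2L`-periodic heat kernel `Θ(a) = ∑ₘ heatKernel β (a + 2 L m)`. In the box every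
image point is at least `|x - y|` away, so half of each Gaussian exponent can be set aside as
`exp (-(x - y)² / (8 β))`. Summing what remains over the lattice costs a factor `1 + √β / (2 L)`,
which is harmless for `√β ≤ 2 L`. For `2 L ≤ √β` the factor is regained because only differences and
derivatives of the periodic function `Θ` occur: by the mean value theorem over one period, and
Rolle's theorem for derivatives, they are at most `2 L` times the supremum of the next derivative.
Hence, uniformly in `L`, each derivative of order at most two of `g_{0,L}` obeys the Gaussian bound
of the corresponding derivative of the free kernel. Taking products, `G_{0,L}` and `G_{0,∞}`
separately satisfy the claimed bounds, even without the factor `1 + β`.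
-/

open scoped Topology

section HeatKernel

/-- The heat kernel `(2πβ)^{-1/2} exp(-u² / (2β))` of `½ d²/du²` on the line, as a function of the
difference `u` of its two spatial arguments. -/
noncomputable def heatKernel (β u : ℝ) : ℝ :=
  (2 * π * β) ^ (-(1/2) : ℝ) * exp (-u ^ 2 / (2 * β))

lemma heatKernel_eq_scaled_gaussian {β : ℝ} (hβ : 0 < β) (u : ℝ) :
    heatKernel β u = (√(2 * π))⁻¹ * (√β)⁻¹ * exp (-(((√β)⁻¹ * u) ^ 2 / 2)) := by
  have hexp : -u ^ 2 / (2 * β) = -(((√β)⁻¹ * u) ^ 2 / 2) := by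
    rw [mul_pow, inv_pow, sq_sqrt hβ.le]
    field_simp
  rw [heatKernel, rpow_neg (by positivity), ← sqrt_eq_rpow, sqrt_mul (by positivity), mul_inv, hexp]

lemma contDiff_heatKernel (β : ℝ) {n : WithTop ℕ∞} : ContDiff ℝ n (heatKernel β) := by
  unfold heatKernel
  fun_prop

lemma hasDerivAt_iteratedDeriv_heatKernel (n : ℕ) (β u : ℝ) :
    HasDerivAt (iteratedDeriv n (heatKernel β)) (iteratedDeriv (n + 1) (heatKernel β) u) u := by
  rw [iteratedDeriv_succ]
  exact ((contDiff_heatKernel β (n := (n + 1 : ℕ))).differentiable_iteratedDeriv n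
    (by exact_mod_cast n.lt_succ_self) u).hasDerivAt

lemma iteratedDeriv_heatKernel {β : ℝ} (hβ : 0 < β) (n : ℕ) (u : ℝ) :
    iteratedDeriv n (heatKernel β) u = (√(2 * π))⁻¹ * (√β)⁻¹ ^ (n + 1) * ((-1) ^ n *
      Polynomial.aeval ((√β)⁻¹ * u) (Polynomial.hermite n) *
        exp (-(((√β)⁻¹ * u) ^ 2 / 2))) := by
  have hgauss : ContDiff ℝ n fun v : ℝ => exp (-(v ^ 2 / 2)) := by fun_prop
  rw [funext (heatKernel_eq_scaled_gaussian hβ), iteratedDeriv_const_mul_field,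
    iteratedDeriv_comp_const_mul hgauss]
  simp only [iteratedDeriv_eq_iterate, Polynomial.deriv_gaussian_eq_hermite_mul_gaussian]
  ring

lemma iteratedDeriv_two_heatKernel {β : ℝ} (hβ : 0 < β) (u : ℝ) :
    iteratedDeriv 2 (heatKernel β) u = (u ^ 2 / β ^ 2 - 1 / β) * heatKernel β u := by
  have hermite_two : Polynomial.hermite 2 = Polynomial.X ^ 2 - 1 := by
    simp [Polynomial.hermite_succ, sq]
  have hsq : (√β)⁻¹ ^ 2 = β⁻¹ := by rw [inv_pow, sq_sqrt hβ.le]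
  rw [iteratedDeriv_heatKernel hβ, hermite_two, heatKernel_eq_scaled_gaussian hβ]
  simp only [map_sub, map_pow, Polynomial.aeval_X, map_one]
  rw [pow_succ _ 2, mul_pow, hsq]
  ring

lemma hasDerivAt_heatKernel_time {β : ℝ} (hβ : 0 < β) (u : ℝ) :
    HasDerivAt (fun b => heatKernel b u) (iteratedDeriv 2 (heatKernel β) u / 2) β := by
  have hpos : 2 * π * β ≠ 0 := by positivity
  have hprefactor : HasDerivAt (fun b : ℝ => (2 * π * b) ^ (-(1/2) : ℝ))
      (-(1 / (2 * β)) * (2 * π * β) ^ (-(1/2) : ℝ)) β := by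
    refine (((hasDerivAt_id' β).const_mul (2 * π)).rpow_const (p := -(1/2))
      (Or.inl hpos)).congr_deriv ?_
    rw [rpow_sub_one hpos]
    field_simp
  have hexponent : HasDerivAt (fun b : ℝ => -u ^ 2 / (2 * b)) (u ^ 2 / (2 * β ^ 2)) β := by
    simp only [div_eq_mul_inv]
    refine ((((hasDerivAt_id' β).const_mul 2).fun_inv (by positivity)).const_mul
      (-u ^ 2)).congr_deriv ?_
    field_simp
  rw [iteratedDeriv_two_heatKernel hβ]
  refine (hprefactor.fun_mul hexponent.exp).congr_deriv ?_
  rw [heatKernel]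
  field_simp
  ring

lemma exists_abs_eval_le_exp_sq_div_four (p : Polynomial ℝ) :
    ∃ C, 0 < C ∧ ∀ v, |p.eval v| ≤ C * exp (v ^ 2 / 4) := by
  induction p using Polynomial.induction_on' with
  | add p q hp hq =>
    obtain ⟨A, hA, hp⟩ := hp
    obtain ⟨B, hB, hq⟩ := hq
    refine ⟨A + B, by positivity, fun v => ?_⟩
    rw [Polynomial.eval_add, add_mul]
    exact (abs_add_le _ _).trans (add_le_add (hp v) (hq v))
  | monomial n a =>
    refine ⟨(|a| + 1) * (n.factorial * exp 1), by positivity, fun v => ?_⟩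
    have habs : |v| ≤ 1 + v ^ 2 / 4 := by nlinarith [sq_abs v, sq_nonneg (|v| - 2)]
    have hpow : |v| ^ n ≤ n.factorial * exp |v| :=
      (div_le_iff₀' (by positivity)).1 (pow_div_factorial_le_exp _ (abs_nonneg v) n)
    rw [Polynomial.eval_monomial, abs_mul, abs_pow]
    calc |a| * |v| ^ n ≤ (|a| + 1) * (n.factorial * exp (1 + v ^ 2 / 4)) := by
          gcongr
          · linarith
          · exact hpow.trans (by gcongr)
      _ = _ := by rw [exp_add]; ring

lemma exists_abs_aeval_hermite_le (N : ℕ) :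
    ∃ C, 0 < C ∧ ∀ n ≤ N, ∀ v : ℝ,
      |Polynomial.aeval v (Polynomial.hermite n)| ≤ C * exp (v ^ 2 / 4) := by
  choose C hC hbound using fun n =>
    exists_abs_eval_le_exp_sq_div_four ((Polynomial.hermite n).map (Int.castRingHom ℝ))
  refine ⟨∑ n ∈ Finset.range (N + 1), C n,
    Finset.sum_pos (fun n _ => hC n) Finset.nonempty_range_add_one, fun n hn v => ?_⟩
  have hle : C n ≤ ∑ n ∈ Finset.range (N + 1), C n :=
    Finset.single_le_sum (fun n _ => (hC n).le) (Finset.mem_range_succ_iff.2 hn)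
  rw [Polynomial.aeval_def, Polynomial.eval₂_eq_eval_map]
  exact (hbound n v).trans (by gcongr)

lemma exists_abs_iteratedDeriv_heatKernel_le (N : ℕ) :
    ∃ C, 0 < C ∧ ∀ n ≤ N, ∀ {β : ℝ}, 0 < β → ∀ u,
      |iteratedDeriv n (heatKernel β) u| ≤ C * (√β)⁻¹ ^ (n + 1) * exp (-u ^ 2 / (4 * β)) := by
  obtain ⟨C, hC, hermite_le⟩ := exists_abs_aeval_hermite_le N
  refine ⟨(√(2 * π))⁻¹ * C, by positivity, fun n hn β hβ u => ?_⟩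
  set v := (√β)⁻¹ * u with hv
  have hexp : exp (v ^ 2 / 4) * exp (-(v ^ 2 / 2)) = exp (-u ^ 2 / (4 * β)) := by
    rw [← exp_add, hv, mul_pow, inv_pow, sq_sqrt hβ.le]
    congr 1
    field_simp
    ring
  rw [iteratedDeriv_heatKernel hβ, abs_mul, abs_mul ((-1) ^ n * _), abs_mul ((-1) ^ n),
    abs_neg_one_pow, one_mul, abs_exp, abs_of_pos (by positivity), ← hv]
  calc _ ≤ (√(2 * π))⁻¹ * (√β)⁻¹ ^ (n + 1) * (C * exp (v ^ 2 / 4) * exp (-(v ^ 2 / 2))) := by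
        gcongr
        exact hermite_le n hn v
    _ = _ := by rw [mul_assoc C, hexp]; ring

end HeatKernel

section Lattice

variable {P β : ℝ}

lemma hasSum_pow_natAbs_sub_one {q : ℝ} (hq0 : 0 ≤ q) (hq1 : q < 1) :
    HasSum (fun m : ℤ => q ^ (m.natAbs - 1)) (1 + 2 * (1 - q)⁻¹) := by
  have hgeom := hasSum_geometric_of_lt_one hq0 hq1
  have hnonneg : HasSum (fun n : ℕ => q ^ ((n : ℤ).natAbs - 1)) (1 + (1 - q)⁻¹) := by
    have := HasSum.zero_add (f := fun n : ℕ => q ^ (n - 1)) hgeom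
    simpa only [Int.natAbs_natCast, Nat.zero_sub, pow_zero] using this
  have hneg : HasSum (fun n : ℕ => q ^ ((-((n : ℤ) + 1)).natAbs - 1)) (1 - q)⁻¹ := by
    have hexponent (n : ℕ) : (-((n : ℤ) + 1)).natAbs - 1 = n := by omega
    simpa only [hexponent] using hgeom
  rw [two_mul, ← add_assoc]
  exact HasSum.of_nat_of_neg_add_one (f := fun m : ℤ => q ^ (m.natAbs - 1)) hnonneg hneg

lemma inv_one_sub_exp_neg_le {s : ℝ} (hs : 0 < s) : (1 - exp (-s))⁻¹ ≤ 1 + 1 / s := by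
  have hmul : exp (-s) * (1 + s) ≤ 1 := by
    rw [exp_neg, inv_mul_le_iff₀ (exp_pos s)]
    linarith [add_one_le_exp s]
  have hlt : exp (-s) < 1 := by simpa using hs
  rw [inv_le_iff_one_le_mul₀ (by linarith)]
  field_simp
  nlinarith

lemma natAbs_sub_one_mul_le_abs_add_int_mul {a : ℝ} (ha : |a| ≤ P) (m : ℤ) :
    ((m.natAbs - 1 : ℕ) : ℝ) * P ≤ |a + m * P| := by
  have hP : 0 ≤ P := (abs_nonneg a).trans ha
  rcases eq_or_ne m 0 with rfl | hm
  · simp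
  · have hcast : ((m.natAbs - 1 : ℕ) : ℝ) = |(m : ℝ)| - 1 := by
      rw [Nat.cast_pred (Int.natAbs_pos.2 hm), Nat.cast_natAbs, Int.cast_abs]
    have htri : |(m : ℝ) * P| ≤ |a + m * P| + |a| := by
      simpa using abs_sub (a + m * P) a
    rw [abs_mul, abs_of_nonneg hP] at htri
    rw [hcast]
    linarith

-- Completing the square: `(n r)² / 8 ≥ n r / 4 - 1 / 8` with `r = P / √β`.
lemma exp_neg_sq_div_le_geometric (hP : 0 ≤ P) (hβ : 0 < β) {n : ℕ} {u : ℝ}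
    (hu : n * P ≤ |u|) :
    exp (-u ^ 2 / (8 * β)) ≤ 2 * exp (-(P / (4 * √β))) ^ n := by
  have hexponent : -u ^ 2 / (8 * β) ≤ 1 / 8 + n * -(P / (4 * √β)) := by
    have hsq : (n * P) ^ 2 ≤ u ^ 2 := by
      rw [← sq_abs u]
      gcongr
    have hdiv : (n * P) ^ 2 / (8 * β) ≤ u ^ 2 / (8 * β) := by gcongr
    have hscale : (n * P) ^ 2 / (8 * β) = (n * (P / √β)) ^ 2 / 8 := by
      rw [mul_pow, mul_pow, div_pow, sq_sqrt hβ.le]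
      field_simp
    have hquarter : (n : ℝ) * (P / (4 * √β)) = n * (P / √β) / 4 := by field_simp
    rw [neg_div, mul_neg, hquarter]
    nlinarith [sq_nonneg (n * (P / √β) - 1)]
  have hconst : exp (1 / 8) ≤ 2 := by
    have := exp_bound_div_one_sub_of_interval (x := 1 / 8) (by norm_num) (by norm_num)
    norm_num at this ⊢
    linarith
  calc _ ≤ exp (1 / 8) * exp (n * -(P / (4 * √β))) := by rw [← exp_add]; gcongr
    _ ≤ _ := by rw [exp_nat_mul]; gcongr

lemma abs_sub_round_mul_le (hP : 0 < P) (a : ℝ) : |a - round (a / P) * P| ≤ P / 2 := by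
  have hfactor : a - round (a / P) * P = (a / P - round (a / P)) * P := by field_simp
  rw [hfactor, abs_mul, abs_of_pos hP]
  linarith [mul_le_mul_of_nonneg_right (abs_sub_round (a / P)) hP.le]

lemma exists_hasSum_gaussian_majorant (hP : 0 < P) (hβ : 0 < β) (a₀ : ℝ) :
    ∃ (g : ℤ → ℝ) (S : ℝ), HasSum g S ∧ S ≤ 16 * (1 + √β / P) ∧
      ∀ a ∈ Metric.ball a₀ (P / 2), ∀ m : ℤ, exp (-(a + m * P) ^ 2 / (8 * β)) ≤ g m := by
  set s := P / (4 * √β) with hs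
  have hs0 : 0 < s := by have := sqrt_pos.2 hβ; positivity
  set k := round (a₀ / P)
  have hsum := ((Equiv.addRight k).hasSum_iff.2 (hasSum_pow_natAbs_sub_one (exp_pos (-s)).le
    (by simpa using hs0))).mul_left 2
  refine ⟨_, _, hsum, ?_, fun a ha m => exp_neg_sq_div_le_geometric hP.le hβ ?_⟩
  · have hinv := inv_one_sub_exp_neg_le hs0
    have hone_div : 1 / s = 4 * (√β / P) := by rw [hs]; field_simp
    have : 0 ≤ √β / P := by positivity
    linarith
  · have hclose : |a - k * P| ≤ P := by
      rw [Metric.mem_ball, Real.dist_eq] at ha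
      have := abs_add_le (a - a₀) (a₀ - k * P)
      rw [sub_add_sub_cancel] at this
      linarith [abs_sub_round_mul_le hP a₀]
    have hshift : a + m * P = a - k * P + ((m + k : ℤ) : ℝ) * P := by push_cast; ring
    rw [hshift]
    exact natAbs_sub_one_mul_le_abs_add_int_mul hclose (m + k)

end Lattice

section PeriodicHeatKernel

variable {P β a : ℝ}

/-- The `n`-th space derivative of the `P`-periodic heat kernel `∑ m, heatKernel β (a + m P)`,
defined by differentiating under the sum. -/
noncomputable def periodicHeatKernel (n : ℕ) (P β a : ℝ) : ℝ :=
  ∑' m : ℤ, iteratedDeriv n (heatKernel β) (a + m * P)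

lemma periodic_periodicHeatKernel (n : ℕ) (P β : ℝ) :
    Function.Periodic (periodicHeatKernel n P β) P := fun a => by
  unfold periodicHeatKernel
  rw [← (Equiv.addRight (1 : ℤ)).tsum_eq fun m : ℤ => iteratedDeriv n (heatKernel β) (a + m * P)]
  refine tsum_congr fun m => ?_
  rw [Equiv.coe_addRight]
  push_cast
  ring_nf

lemma exp_neg_sq_div_four_le_mul {d u : ℝ} (hβ : 0 < β) (hd : d ^ 2 ≤ u ^ 2) :
    exp (-u ^ 2 / (4 * β)) ≤ exp (-d ^ 2 / (8 * β)) * exp (-u ^ 2 / (8 * β)) := by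
  have hsplit : -u ^ 2 / (4 * β) = -u ^ 2 / (8 * β) + -u ^ 2 / (8 * β) := by
    field_simp
    ring
  rw [hsplit, exp_add]
  gcongr

lemma exp_neg_sq_div_four_le {b u : ℝ} (hb : 0 < b) (hbβ : b ≤ 2 * β) :
    exp (-u ^ 2 / (4 * b)) ≤ exp (-u ^ 2 / (8 * β)) := by
  rw [exp_le_exp, neg_div, neg_div, neg_le_neg_iff]
  exact div_le_div_of_nonneg_left (sq_nonneg u) (by positivity) (by linarith)

lemma summable_iteratedDeriv_heatKernel (n : ℕ) (hP : 0 < P) (hβ : 0 < β) (a : ℝ) :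
    Summable fun m : ℤ => iteratedDeriv n (heatKernel β) (a + m * P) := by
  obtain ⟨C, hC, kernel_le⟩ := exists_abs_iteratedDeriv_heatKernel_le n
  obtain ⟨g, S, hg, -, hmaj⟩ := exists_hasSum_gaussian_majorant hP hβ a
  refine .of_norm_bounded (hg.summable.mul_left (C * (√β)⁻¹ ^ (n + 1))) fun m => ?_
  refine (kernel_le n le_rfl hβ _).trans ?_
  gcongr
  exact (exp_neg_sq_div_four_le hβ (by linarith)).trans
    (hmaj a (Metric.mem_ball_self (by positivity)) m)

lemma hasDerivAt_periodicHeatKernel (n : ℕ) (hP : 0 < P) (hβ : 0 < β) (a : ℝ) :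
    HasDerivAt (periodicHeatKernel n P β) (periodicHeatKernel (n + 1) P β a) a := by
  obtain ⟨C, hC, kernel_le⟩ := exists_abs_iteratedDeriv_heatKernel_le (n + 1)
  obtain ⟨g, S, hg, -, hmaj⟩ := exists_hasSum_gaussian_majorant hP hβ a
  have ha : a ∈ Metric.ball a (P / 2) := Metric.mem_ball_self (by positivity)
  refine hasDerivAt_tsum_of_isPreconnected (hg.summable.mul_left (C * (√β)⁻¹ ^ (n + 1 + 1)))
    Metric.isOpen_ball (convex_ball a (P / 2)).isPreconnected
    (fun m v _ => (hasDerivAt_iteratedDeriv_heatKernel n β _).comp_add_const v (m * P))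
    (fun m v hv => ?_) ha (summable_iteratedDeriv_heatKernel n hP hβ a) ha
  refine (kernel_le _ le_rfl hβ _).trans ?_
  gcongr
  exact (exp_neg_sq_div_four_le hβ (by linarith)).trans (hmaj v hv m)

lemma hasDerivAt_periodicHeatKernel_time (hP : 0 < P) (hβ : 0 < β) (a : ℝ) :
    HasDerivAt (fun b => periodicHeatKernel 0 P b a) (periodicHeatKernel 2 P β a / 2) β := by
  obtain ⟨C, hC, kernel_le⟩ := exists_abs_iteratedDeriv_heatKernel_le 2
  obtain ⟨g, S, hg, -, hmaj⟩ := exists_hasSum_gaussian_majorant hP hβ a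
  have hmem : β ∈ Set.Ioo (β / 2) (2 * β) := ⟨by linarith, by linarith⟩
  simp only [periodicHeatKernel, iteratedDeriv_zero, ← tsum_div_const]
  refine hasDerivAt_tsum_of_isPreconnected (g := fun (m : ℤ) b => heatKernel b (a + m * P))
    (hg.summable.mul_left (C * (√(β / 2))⁻¹ ^ (2 + 1))) isOpen_Ioo isPreconnected_Ioo
    (fun m b hb => hasDerivAt_heatKernel_time (by linarith [hb.1]) (a + m * P))
    (fun m b hb => ?_) hmem
    (by simpa only [iteratedDeriv_zero] using summable_iteratedDeriv_heatKernel 0 hP hβ a) hmem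
  have hb0 : 0 < b := by linarith [hb.1]
  have hβb : β / 2 ≤ b := hb.1.le
  rw [Real.norm_eq_abs, abs_div, abs_two]
  refine (half_le_self (abs_nonneg _)).trans ((kernel_le 2 le_rfl hb0 _).trans ?_)
  gcongr
  exact (exp_neg_sq_div_four_le hb0 hb.2.le).trans
    (hmaj a (Metric.mem_ball_self (by positivity)) m)

lemma exists_abs_periodicHeatKernel_le (N : ℕ) :
    ∃ C, 0 < C ∧ ∀ n ≤ N, ∀ {P β a d : ℝ}, 0 < P → 0 < β →
      (∀ m : ℤ, d ^ 2 ≤ (a + m * P) ^ 2) → |periodicHeatKernel n P β a| ≤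
        C * (√β)⁻¹ ^ (n + 1) * (1 + √β / P) * exp (-d ^ 2 / (8 * β)) := by
  obtain ⟨C, hC, kernel_le⟩ := exists_abs_iteratedDeriv_heatKernel_le N
  refine ⟨16 * C, by positivity, fun n hn P β a d hP hβ hd => ?_⟩
  obtain ⟨g, S, hg, hS, hmaj⟩ := exists_hasSum_gaussian_majorant hP hβ a
  have hterm (m : ℤ) : ‖iteratedDeriv n (heatKernel β) (a + m * P)‖ ≤
      C * (√β)⁻¹ ^ (n + 1) * exp (-d ^ 2 / (8 * β)) * g m := by
    refine (kernel_le n hn hβ _).trans ?_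
    rw [mul_assoc _ _ (g m)]
    gcongr
    refine (exp_neg_sq_div_four_le_mul hβ (hd m)).trans ?_
    gcongr
    exact hmaj a (Metric.mem_ball_self (by positivity)) m
  calc |periodicHeatKernel n P β a| ≤ C * (√β)⁻¹ ^ (n + 1) * exp (-d ^ 2 / (8 * β)) * S :=
        tsum_of_norm_bounded (hg.mul_left _) hterm
    _ ≤ C * (√β)⁻¹ ^ (n + 1) * exp (-d ^ 2 / (8 * β)) * (16 * (1 + √β / P)) := by gcongr
    _ = _ := by ring

lemma abs_sub_le_of_periodic_of_hasDerivAt {f f' : ℝ → ℝ} {M : ℝ} (hP : 0 < P)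
    (hf : Function.Periodic f P) (hderiv : ∀ x, HasDerivAt f (f' x) x) (hM : ∀ x, |f' x| ≤ M)
    (x y : ℝ) : |f x - f y| ≤ P * M := by
  obtain ⟨z, hz, hxz⟩ := hf.exists_mem_Ico hP x y
  have hmean := convex_univ.norm_image_sub_le_of_norm_hasDerivWithin_le
    (fun v _ => (hderiv v).hasDerivWithinAt) (fun v _ => hM v) (Set.mem_univ y) (Set.mem_univ z)
  have hM0 : 0 ≤ M := (abs_nonneg _).trans (hM x)
  have hzy : |z - y| ≤ P := abs_le.2 ⟨by linarith [hz.1], by linarith [hz.2]⟩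
  calc |f x - f y| = |f z - f y| := by rw [hxz]
    _ ≤ M * |z - y| := hmean
    _ ≤ P * M := by rw [mul_comm]; gcongr

lemma abs_deriv_le_of_periodic_of_hasDerivAt {f f' f'' : ℝ → ℝ} {M : ℝ} (hP : 0 < P)
    (hf : Function.Periodic f P) (hf' : Function.Periodic f' P)
    (hderiv : ∀ x, HasDerivAt f (f' x) x) (hderiv' : ∀ x, HasDerivAt f' (f'' x) x)
    (hM : ∀ x, |f'' x| ≤ M) (x : ℝ) : |f' x| ≤ P * M := by
  obtain ⟨c, -, hc⟩ := exists_hasDerivAt_eq_zero hP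
    (fun v _ => (hderiv v).continuousAt.continuousWithinAt)
    (by simpa using (hf 0).symm) (fun v _ => hderiv v)
  simpa [hc] using abs_sub_le_of_periodic_of_hasDerivAt hP hf' hderiv' hM x c

lemma exists_mul_abs_periodicHeatKernel_succ_le (N : ℕ) :
    ∃ C, 0 < C ∧ ∀ n ≤ N, ∀ {P β : ℝ}, 0 < P → P ≤ √β → ∀ a,
      P * |periodicHeatKernel (n + 1) P β a| ≤ C * (√β)⁻¹ ^ (n + 1) := by
  obtain ⟨C, hC, periodic_le⟩ := exists_abs_periodicHeatKernel_le (N + 1)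
  refine ⟨2 * C, by positivity, fun n hn P β hP hPβ a => ?_⟩
  have hsqrt : 0 < √β := hP.trans_le hPβ
  have hbound := periodic_le (n + 1) (by omega) (a := a) (d := 0) hP (sqrt_pos.1 hsqrt)
    fun m => by simpa using sq_nonneg (a + m * P)
  have hsum : P * (1 + √β / P) ≤ 2 * √β := by field_simp; linarith
  calc P * |periodicHeatKernel (n + 1) P β a|
      ≤ P * (C * (√β)⁻¹ ^ (n + 1 + 1) * (1 + √β / P)) := by gcongr; simpa using hbound
    _ = C * (√β)⁻¹ ^ (n + 1 + 1) * (P * (1 + √β / P)) := by ring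
    _ ≤ C * (√β)⁻¹ ^ (n + 1 + 1) * (2 * √β) := by gcongr
    _ = 2 * C * (√β)⁻¹ ^ (n + 1) := by rw [pow_succ _ (n + 1)]; field_simp

lemma one_le_two_mul_exp_neg_sq_div {d : ℝ} (hP : 0 < P) (hPβ : P ≤ √β)
    (hd : ∀ m : ℤ, d ^ 2 ≤ (a + m * P) ^ 2) : 1 ≤ 2 * exp (-d ^ 2 / (8 * β)) := by
  have hβ : 0 < β := sqrt_pos.1 (hP.trans_le hPβ)
  have hdP : d ^ 2 ≤ P ^ 2 := by
    refine (hd (-round (a / P))).trans (sq_le_sq' ?_ ?_) <;> push_cast <;>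
      linarith [abs_le.1 (abs_sub_round_mul_le hP a)]
  have hsmall : d ^ 2 / (8 * β) ≤ 1 / 2 := by
    rw [div_le_iff₀ (by positivity)]
    nlinarith [sq_sqrt hβ.le]
  rw [neg_div]
  linarith [add_one_le_exp (-(d ^ 2 / (8 * β)))]

lemma one_add_sqrt_div_le_two (hP : 0 < P) (hβP : √β ≤ P) : 1 + √β / P ≤ 2 := by
  linarith [(div_le_one hP).2 hβP]

/- For `√β ≤ P` this is termwise summation. For `P ≤ √β` summation loses a factor `√β / P`, which is
regained by integrating the next derivative over a period. -/
lemma exists_abs_periodicHeatKernel_succ_le (N : ℕ) :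
    ∃ C, 0 < C ∧ ∀ n ≤ N, ∀ {P β a d : ℝ}, 0 < P → 0 < β →
      (∀ m : ℤ, d ^ 2 ≤ (a + m * P) ^ 2) → |periodicHeatKernel (n + 1) P β a| ≤
        C * (√β)⁻¹ ^ (n + 1 + 1) * exp (-d ^ 2 / (8 * β)) := by
  obtain ⟨A, hA, short_time⟩ := exists_abs_periodicHeatKernel_le (N + 1)
  obtain ⟨B, hB, long_time⟩ := exists_mul_abs_periodicHeatKernel_succ_le (N + 1)
  refine ⟨2 * A + 2 * B, by positivity, fun n hn P β a d hP hβ hd => ?_⟩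
  rcases le_total (√β) P with hβP | hPβ
  · have hfactor := one_add_sqrt_div_le_two hP hβP
    calc _ ≤ A * (√β)⁻¹ ^ (n + 1 + 1) * 2 * exp (-d ^ 2 / (8 * β)) :=
          (short_time (n + 1) (by omega) hP hβ hd).trans (by gcongr)
      _ = 2 * A * (√β)⁻¹ ^ (n + 1 + 1) * exp (-d ^ 2 / (8 * β)) := by ring
      _ ≤ _ := by gcongr; linarith
  · have hderiv (k : ℕ) (v : ℝ) := hasDerivAt_periodicHeatKernel k hP hβ v
    have hperiod (k : ℕ) := periodic_periodicHeatKernel k P β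
    have hsup (v : ℝ) : |periodicHeatKernel (n + 2) P β v| ≤ B * (√β)⁻¹ ^ (n + 2) / P :=
      (le_div_iff₀' hP).2 (long_time (n + 1) (by omega) hP hPβ v)
    calc _ ≤ P * (B * (√β)⁻¹ ^ (n + 2) / P) := abs_deriv_le_of_periodic_of_hasDerivAt hP
          (hperiod n) (hperiod (n + 1)) (hderiv n) (hderiv (n + 1)) hsup a
      _ = B * (√β)⁻¹ ^ (n + 2) * 1 := by field_simp
      _ ≤ B * (√β)⁻¹ ^ (n + 2) * (2 * exp (-d ^ 2 / (8 * β))) := by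
          gcongr
          exact one_le_two_mul_exp_neg_sq_div hP hPβ hd
      _ = 2 * B * (√β)⁻¹ ^ (n + 2) * exp (-d ^ 2 / (8 * β)) := by ring
      _ ≤ _ := by gcongr; linarith

lemma exists_abs_periodicHeatKernel_sub_le :
    ∃ C, 0 < C ∧ ∀ {P β a b d : ℝ}, 0 < P → 0 < β →
      (∀ m : ℤ, d ^ 2 ≤ (a + m * P) ^ 2) → (∀ m : ℤ, d ^ 2 ≤ (b + m * P) ^ 2) →
      |periodicHeatKernel 0 P β a - periodicHeatKernel 0 P β b| ≤
        C * (√β)⁻¹ * exp (-d ^ 2 / (8 * β)) := by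
  obtain ⟨A, hA, short_time⟩ := exists_abs_periodicHeatKernel_le 0
  obtain ⟨B, hB, long_time⟩ := exists_mul_abs_periodicHeatKernel_succ_le 0
  refine ⟨4 * A + 2 * B, by positivity, fun {P β a b d} hP hβ ha hb => ?_⟩
  rcases le_total (√β) P with hβP | hPβ
  · have hfactor := one_add_sqrt_div_le_two hP hβP
    have hle {v : ℝ} (hv : ∀ m : ℤ, d ^ 2 ≤ (v + m * P) ^ 2) :
        |periodicHeatKernel 0 P β v| ≤ A * (√β)⁻¹ ^ (0 + 1) * 2 * exp (-d ^ 2 / (8 * β)) :=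
      (short_time 0 le_rfl hP hβ hv).trans (by gcongr)
    calc _ ≤ _ := (abs_sub _ _).trans (add_le_add (hle ha) (hle hb))
      _ = 4 * A * (√β)⁻¹ * exp (-d ^ 2 / (8 * β)) := by ring
      _ ≤ _ := by gcongr; linarith
  · have hsup (v : ℝ) : |periodicHeatKernel 1 P β v| ≤ B * (√β)⁻¹ / P :=
      (le_div_iff₀' hP).2 (by simpa using long_time 0 le_rfl hP hPβ v)
    calc _ ≤ P * (B * (√β)⁻¹ / P) := abs_sub_le_of_periodic_of_hasDerivAt hP
          (periodic_periodicHeatKernel 0 P β) (hasDerivAt_periodicHeatKernel 0 hP hβ) hsup a b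
      _ = B * (√β)⁻¹ * 1 := by field_simp
      _ ≤ B * (√β)⁻¹ * (2 * exp (-d ^ 2 / (8 * β))) := by
          gcongr
          exact one_le_two_mul_exp_neg_sq_div hP hPβ ha
      _ = 2 * B * (√β)⁻¹ * exp (-d ^ 2 / (8 * β)) := by ring
      _ ≤ _ := by gcongr; linarith

end PeriodicHeatKernel

section Images

variable {L β x y : ℝ}

lemma g0L_eq_periodicHeatKernel_sub (hL : 0 < L) (hβ : 0 < β) (x y : ℝ) :
    g0L L x y β = periodicHeatKernel 0 (2 * L) β (x - y) -
      periodicHeatKernel 0 (2 * L) β (x + y - L) := by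
  have hsummable := summable_iteratedDeriv_heatKernel 0 (mul_pos two_pos hL) hβ
  have hreindexed := (Equiv.neg ℤ).summable_iff.2 (hsummable (x + y - L))
  rw [periodicHeatKernel, periodicHeatKernel, ← (Equiv.neg ℤ).tsum_eq fun m : ℤ =>
    iteratedDeriv 0 (heatKernel β) (x + y - L + m * (2 * L))]
  refine Eq.trans ?_ ((hsummable (x - y)).tsum_sub hreindexed)
  rw [g0L, ← tsum_mul_left]
  refine tsum_congr fun m => ?_
  simp only [iteratedDeriv_zero, heatKernel, Equiv.neg_apply, Int.cast_neg, mul_sub]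
  ring_nf

lemma sq_le_sq_add_int_mul {P a : ℝ} (ha : |a| ≤ P / 2) (m : ℤ) : a ^ 2 ≤ (a + m * P) ^ 2 := by
  obtain ⟨hlower, hupper⟩ := abs_le.1 ha
  have hfactor : (a + m * P) ^ 2 - a ^ 2 = m * P * (2 * a + m * P) := by ring
  rw [← sub_nonneg, hfactor]
  rcases lt_trichotomy m 0 with hm | rfl | hm
  · have : (m : ℝ) ≤ -1 := by exact_mod_cast Int.le_sub_one_of_lt hm
    exact mul_nonneg_of_nonpos_of_nonpos (by nlinarith) (by nlinarith)
  · simp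
  · have : (1 : ℝ) ≤ m := by exact_mod_cast hm
    exact mul_nonneg (by nlinarith) (by nlinarith)

lemma sq_sub_le_sq_reflection (hx : x ∈ Set.Ioo (-(L / 2)) (L / 2))
    (hy : y ∈ Set.Ioo (-(L / 2)) (L / 2)) (m : ℤ) :
    (x - y) ^ 2 ≤ (x + y - L + m * (2 * L)) ^ 2 := by
  obtain ⟨hx₁, hx₂⟩ := hx
  obtain ⟨hy₁, hy₂⟩ := hy
  have hfactor : (x + y - L + m * (2 * L)) ^ 2 - (x - y) ^ 2 =
      (2 * x + (2 * m - 1) * L) * (2 * y + (2 * m - 1) * L) := by ring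
  rw [← sub_nonneg, hfactor]
  -- Both factors have the sign of `2m - 1`, since `|2x|, |2y| < L ≤ |2m - 1| L`.
  rcases le_or_gt m 0 with hm | hm
  · have : (m : ℝ) ≤ 0 := by exact_mod_cast hm
    exact mul_nonneg_of_nonpos_of_nonpos (by nlinarith) (by nlinarith)
  · have : (1 : ℝ) ≤ m := by exact_mod_cast hm
    exact mul_nonneg (by nlinarith) (by nlinarith)

end Images

section HeatKernelJet

/-- `h a b β x y` plays the role of `∂ₓᵃ ∂ᵧᵇ K(x, y; β)` for a kernel `K = h 0 0` solving
`∂K/∂β = ½ ∂²K/∂x²` on the whole line. -/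
structure IsHeatKernelJet (h : ℕ → ℕ → ℝ → ℝ → ℝ → ℝ) : Prop where
  hasDerivAt_fst (a b : ℕ) {β : ℝ} (hβ : 0 < β) (x y : ℝ) :
    HasDerivAt (fun t => h a b β t y) (h (a + 1) b β x y) x
  hasDerivAt_snd (a b : ℕ) {β : ℝ} (hβ : 0 < β) (x y : ℝ) :
    HasDerivAt (h a b β x) (h a (b + 1) β x y) y
  hasDerivAt_time {β : ℝ} (hβ : 0 < β) (x y : ℝ) :
    HasDerivAt (fun t => h 0 0 t x y) (h 2 0 β x y / 2) β

/-- On `s × s` the derivatives `h a b` with `a + b ≤ 2` have the size of those of the heat kernel on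
the line. The loss from `exp (-(x - y)² / (2 β))` to `exp (-(x - y)² / (8 β))` absorbs polynomial
factors and lattice sums. -/
def HasGaussianBounds (s : Set ℝ) (C : ℝ) (h : ℕ → ℕ → ℝ → ℝ → ℝ → ℝ) : Prop :=
  ∀ ⦃a b : ℕ⦄, a + b ≤ 2 → ∀ ⦃β : ℝ⦄, 0 < β → ∀ ⦃x⦄, x ∈ s → ∀ ⦃y⦄, y ∈ s →
    |h a b β x y| ≤ C * (√β)⁻¹ ^ (a + b + 1) * exp (-(x - y) ^ 2 / (8 * β))

/-- `∂ₓᵃ ∂ᵧᵇ` of the heat kernel on the line at `(x, y)`. -/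
noncomputable def freeKernel (a b : ℕ) (β x y : ℝ) : ℝ :=
  (-1) ^ b * iteratedDeriv (a + b) (heatKernel β) (x - y)

/-- `∂ₓᵃ ∂ᵧᵇ` of the Dirichlet heat kernel on `(-L/2, L/2)` at `(x, y)`: the reflection
`y ↦ L - y` and the translations by `2 L` generate the images. -/
noncomputable def dirichletKernel (L : ℝ) (a b : ℕ) (β x y : ℝ) : ℝ :=
  (-1) ^ b * periodicHeatKernel (a + b) (2 * L) β (x - y) -
    periodicHeatKernel (a + b) (2 * L) β (x + y - L)

lemma isHeatKernelJet_freeKernel : IsHeatKernelJet freeKernel where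
  hasDerivAt_fst a b β _ x y := by
    rw [freeKernel, add_right_comm]
    exact ((hasDerivAt_iteratedDeriv_heatKernel (a + b) β _).comp_sub_const x y).const_mul _
  hasDerivAt_snd a b β _ x y := by
    rw [freeKernel, pow_succ, mul_assoc, neg_one_mul, ← add_assoc]
    exact ((hasDerivAt_iteratedDeriv_heatKernel (a + b) β _).comp_const_sub x y).const_mul _
  hasDerivAt_time hβ x y := by
    simpa [freeKernel] using hasDerivAt_heatKernel_time hβ (x - y)

lemma exists_hasGaussianBounds_freeKernel :
    ∃ C, 0 < C ∧ HasGaussianBounds Set.univ C freeKernel := by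
  obtain ⟨C, hC, kernel_le⟩ := exists_abs_iteratedDeriv_heatKernel_le 2
  refine ⟨C, hC, fun a b hab β hβ x _ y _ => ?_⟩
  rw [freeKernel, abs_mul, abs_neg_one_pow, one_mul]
  exact (kernel_le (a + b) hab hβ _).trans
    (mul_le_mul_of_nonneg_left (exp_neg_sq_div_four_le hβ (by linarith)) (by positivity))

lemma isHeatKernelJet_dirichletKernel {L : ℝ} (hL : 0 < L) :
    IsHeatKernelJet (dirichletKernel L) where
  hasDerivAt_fst a b β hβ x y := by
    have hderiv := hasDerivAt_periodicHeatKernel (a + b) (mul_pos two_pos hL) hβ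
    simp only [dirichletKernel, add_sub_assoc]
    rw [add_right_comm]
    exact (((hderiv _).comp_sub_const x y).const_mul _).sub ((hderiv _).comp_add_const x (y - L))
  hasDerivAt_snd a b β hβ x y := by
    have hderiv := hasDerivAt_periodicHeatKernel (a + b) (mul_pos two_pos hL) hβ
    rw [dirichletKernel, pow_succ, mul_assoc, neg_one_mul, ← add_assoc]
    refine (((hderiv _).comp_const_sub x y).const_mul _).sub ?_
    simp only [add_sub_right_comm x _ L]
    exact (hderiv _).comp_const_add (x - L) y
  hasDerivAt_time hβ x y := by
    have htime (a : ℝ) := hasDerivAt_periodicHeatKernel_time (mul_pos two_pos hL) hβ a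
    simpa [dirichletKernel, sub_div] using (htime (x - y)).fun_sub (htime (x + y - L))

lemma exists_hasGaussianBounds_dirichletKernel :
    ∃ C, 0 < C ∧ ∀ {L : ℝ}, 0 < L →
      HasGaussianBounds (Set.Ioo (-(L / 2)) (L / 2)) C (dirichletKernel L) := by
  obtain ⟨A, hA, order_zero_le⟩ := exists_abs_periodicHeatKernel_sub_le
  obtain ⟨B, hB, order_succ_le⟩ := exists_abs_periodicHeatKernel_succ_le 1
  refine ⟨A + 2 * B, by positivity, fun {L} hL a b hab β hβ x hx y hy => ?_⟩
  have hP : 0 < 2 * L := by positivity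
  have hsub : |x - y| ≤ 2 * L / 2 :=
    abs_le.2 ⟨by linarith [hx.1, hy.2], by linarith [hx.2, hy.1]⟩
  have htranslation := sq_le_sq_add_int_mul hsub
  have hreflection := sq_sub_le_sq_reflection hx hy
  rw [dirichletKernel]
  rcases hn : a + b with _ | n
  · obtain rfl : b = 0 := by omega
    rw [pow_zero, one_mul, zero_add, pow_one]
    refine (order_zero_le hP hβ htranslation hreflection).trans ?_
    gcongr
    linarith
  · refine (abs_sub _ _).trans ?_
    rw [abs_mul, abs_neg_one_pow, one_mul]
    calc _ ≤ _ := add_le_add (order_succ_le n (by omega) hP hβ htranslation)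
          (order_succ_le n (by omega) hP hβ hreflection)
      _ = 2 * B * (√β)⁻¹ ^ (n + 1 + 1) * exp (-(x - y) ^ 2 / (8 * β)) := by ring
      _ ≤ _ := by gcongr; linarith

end HeatKernelJet

section KernelProd

variable {ι : Type*} [Fintype ι]

/-- The partial derivative, with multi-indices `α` in `x` and `γ` in `y`, of the product kernel
`∏ i, h 0 0 β (x i) (y i)`, where `h` is as in `IsHeatKernelJet`. -/
noncomputable def kernelProd (h : ℕ → ℕ → ℝ → ℝ → ℝ → ℝ) (α γ : ι → ℕ) (β : ℝ) (x y : ι → ℝ) : ℝ :=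
  ∏ i, h (α i) (γ i) β (x i) (y i)

variable {s : Set ℝ} {C β : ℝ} {h : ℕ → ℕ → ℝ → ℝ → ℝ → ℝ} {α γ : ι → ℕ} {x y : ι → ℝ}

lemma abs_kernelProd_le (H : HasGaussianBounds s C h) (hβ : 0 < β) (hαγ : ∀ i, α i + γ i ≤ 2)
    (hx : ∀ i, x i ∈ s) (hy : ∀ i, y i ∈ s) :
    |kernelProd h α γ β x y| ≤ C ^ Fintype.card ι *
      (√β)⁻¹ ^ (∑ i, (α i + γ i) + Fintype.card ι) *
        exp (-(∑ i, (x i - y i) ^ 2) / (8 * β)) := by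
  rw [kernelProd, Finset.abs_prod]
  refine (Finset.prod_le_prod (fun i _ => abs_nonneg _)
    fun i _ => H (hαγ i) hβ (hx i) (hy i)).trans_eq ?_
  rw [Finset.prod_mul_distrib, Finset.prod_mul_distrib, Finset.prod_const, Finset.card_univ,
    Finset.prod_pow_eq_pow_sum, Finset.sum_add_distrib, Finset.sum_const, Finset.card_univ,
    smul_eq_mul, mul_one, ← exp_sum, ← Finset.sum_div, Finset.sum_neg_distrib]

variable [DecidableEq ι]

lemma hasDerivAt_prod_update {F : ι → ℝ → ℝ} {G v : ι → ℝ} {j : ι}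
    (hj : HasDerivAt (F j) (G j) (v j)) (hne : ∀ i ≠ j, F i (v i) = G i) :
    HasDerivAt (fun t => ∏ i, F i (Function.update v j t i)) (∏ i, G i) (v j) := by
  have hsplit (t : ℝ) : ∏ i, F i (Function.update v j t i) =
      F j t * ∏ i ∈ Finset.univ.erase j, G i := by
    rw [← Finset.mul_prod_erase _ _ (Finset.mem_univ j), Function.update_self]
    congr 1
    refine Finset.prod_congr rfl fun i hi => ?_
    rw [Function.update_of_ne (Finset.ne_of_mem_erase hi), hne i (Finset.ne_of_mem_erase hi)]
  rw [funext hsplit, ← Finset.mul_prod_erase _ _ (Finset.mem_univ j)]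
  exact hj.mul_const _

lemma hasDerivAt_kernelProd_fst (H : IsHeatKernelJet h) (hβ : 0 < β) (α γ : ι → ℕ)
    (x y : ι → ℝ) (j : ι) :
    HasDerivAt (fun t => kernelProd h α γ β (Function.update x j t) y)
      (kernelProd h (α + Pi.single j 1) γ β x y) (x j) := by
  unfold kernelProd
  refine hasDerivAt_prod_update (F := fun i t => h (α i) (γ i) β t (y i)) ?_ fun i hi => ?_
  · simpa using H.hasDerivAt_fst (α j) (γ j) hβ (x j) (y j)
  · simp [hi]

lemma hasDerivAt_kernelProd_snd (H : IsHeatKernelJet h) (hβ : 0 < β) (α γ : ι → ℕ)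
    (x y : ι → ℝ) (k : ι) :
    HasDerivAt (fun t => kernelProd h α γ β x (Function.update y k t))
      (kernelProd h α (γ + Pi.single k 1) β x y) (y k) := by
  unfold kernelProd
  refine hasDerivAt_prod_update (F := fun i t => h (α i) (γ i) β (x i) t) ?_ fun i hi => ?_
  · simpa using H.hasDerivAt_snd (α k) (γ k) hβ (x k) (y k)
  · simp [hi]

lemma hasDerivAt_kernelProd_time (H : IsHeatKernelJet h) (hβ : 0 < β) (x y : ι → ℝ) :
    HasDerivAt (fun t => kernelProd h 0 0 t x y)
      (∑ j, kernelProd h (Pi.single j 2) 0 β x y / 2) β := by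
  unfold kernelProd
  refine (HasDerivAt.fun_finsetProd fun i _ => H.hasDerivAt_time hβ (x i) (y i)).congr_deriv ?_
  refine Finset.sum_congr rfl fun j _ => ?_
  rw [← Finset.mul_prod_erase _ _ (Finset.mem_univ j), smul_eq_mul, Pi.single_eq_same,
    mul_comm (h 2 _ _ _ _), mul_div_assoc]
  congr 1
  refine Finset.prod_congr rfl fun i hi => ?_
  rw [Pi.single_eq_of_ne (Finset.ne_of_mem_erase hi)]
  rfl

end KernelProd

section Cube

variable {L β : ℝ}

lemma G0inf_eq_kernelProd (hβ : 0 < β) (x y : Fin 3 → ℝ) :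
    G0inf x y β = kernelProd freeKernel 0 0 β x y := by
  simp only [G0inf, kernelProd, freeKernel, heatKernel, Pi.zero_apply, add_zero, pow_zero, one_mul,
    iteratedDeriv_zero, Finset.prod_mul_distrib, Finset.prod_const, Finset.card_univ,
    Fintype.card_fin]
  rw [← exp_sum, ← Finset.sum_div, Finset.sum_neg_distrib, ← rpow_natCast,
    ← rpow_mul (by positivity)]
  norm_num

lemma G0L_eq_kernelProd (hL : 0 < L) (hβ : 0 < β) (x y : Fin 3 → ℝ) :
    G0L L x y β = kernelProd (dirichletKernel L) 0 0 β x y := by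
  simp [G0L, kernelProd, dirichletKernel, g0L_eq_periodicHeatKernel_sub hL hβ]

lemma deriv_Z0L_time (hL : 0 < L) (hβ : 0 < β) (x y : Fin 3 → ℝ) :
    deriv (fun b => Z0L L x y b) β =
      ∑ j, (kernelProd (dirichletKernel L) (Pi.single j 2) 0 β x y -
        kernelProd freeKernel (Pi.single j 2) 0 β x y) / 2 := by
  have hsub := (hasDerivAt_kernelProd_time (isHeatKernelJet_dirichletKernel hL) hβ x y).fun_sub
    (hasDerivAt_kernelProd_time isHeatKernelJet_freeKernel hβ x y)
  have hZ : (fun b => Z0L L x y b) =ᶠ[𝓝 β] fun b =>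
      kernelProd (dirichletKernel L) 0 0 b x y - kernelProd freeKernel 0 0 b x y := by
    filter_upwards [lt_mem_nhds hβ] with b hb
    rw [Z0L, G0L_eq_kernelProd hL hb, G0inf_eq_kernelProd hb]
  simp only [hZ.deriv_eq, hsub.deriv, ← Finset.sum_sub_distrib, sub_div]

lemma deriv_deriv_Z0L (hL : 0 < L) (hβ : 0 < β) (x y : Fin 3 → ℝ) (j k : Fin 3) :
    deriv (fun t => deriv
        (fun s => Z0L L (Function.update x j t) (Function.update y k s) β) (y k)) (x j) =
      kernelProd (dirichletKernel L) (Pi.single j 1) (Pi.single k 1) β x y -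
        kernelProd freeKernel (Pi.single j 1) (Pi.single k 1) β x y := by
  have hdirichlet := isHeatKernelJet_dirichletKernel hL
  have hfree := isHeatKernelJet_freeKernel
  simp only [Z0L, G0L_eq_kernelProd hL hβ, G0inf_eq_kernelProd hβ,
    ((hasDerivAt_kernelProd_snd hdirichlet hβ _ _ _ y k).fun_sub
      (hasDerivAt_kernelProd_snd hfree hβ _ _ _ y k)).deriv,
    ((hasDerivAt_kernelProd_fst hdirichlet hβ _ _ x y j).fun_sub
      (hasDerivAt_kernelProd_fst hfree hβ _ _ x y j)).deriv, zero_add]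

lemma G0inf_four_mul (hβ : 0 < β) (x y : Fin 3 → ℝ) :
    (8 * π) ^ (3/2 : ℝ) * G0inf x y (4 * β) =
      (√β)⁻¹ ^ 3 * exp (-(∑ i, (x i - y i) ^ 2) / (8 * β)) := by
  have hpow : (√β)⁻¹ ^ 3 = β ^ (-(3/2) : ℝ) := by
    rw [inv_pow, sqrt_eq_rpow, ← rpow_natCast, ← rpow_mul hβ.le, ← rpow_neg hβ.le]
    norm_num
  have hbase : 2 * π * (4 * β) = 8 * π * β := by ring
  have hvariance : 2 * (4 * β) = 8 * β := by ring
  rw [G0inf, hpow, hbase, hvariance, mul_rpow (by positivity) hβ.le,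
    rpow_neg (by positivity : 0 ≤ 8 * π)]
  field_simp

lemma abs_kernelProd_le_G0inf {s : Set ℝ} {C : ℝ} {h : ℕ → ℕ → ℝ → ℝ → ℝ → ℝ}
    (H : HasGaussianBounds s C h) (hβ : 0 < β) {α γ : Fin 3 → ℕ} (hαγ : ∑ i, (α i + γ i) = 2)
    {x y : Fin 3 → ℝ} (hx : ∀ i, x i ∈ s) (hy : ∀ i, y i ∈ s) :
    |kernelProd h α γ β x y| ≤ C ^ 3 * (8 * π) ^ (3/2 : ℝ) * β⁻¹ * G0inf x y (4 * β) := by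
  have horder (i : Fin 3) : α i + γ i ≤ 2 :=
    hαγ ▸ Finset.single_le_sum (f := fun i => α i + γ i) (fun _ _ => Nat.zero_le _)
      (Finset.mem_univ i)
  have hinv : (√β)⁻¹ ^ 2 = β⁻¹ := by rw [inv_pow, sq_sqrt hβ.le]
  refine (abs_kernelProd_le H hβ horder hx hy).trans_eq ?_
  rw [hαγ, Fintype.card_fin, pow_add, hinv]
  linear_combination -C ^ 3 * β⁻¹ * G0inf_four_mul hβ x y

lemma exists_abs_kernelProd_dirichletKernel_sub_freeKernel_le :
    ∃ c, 0 < c ∧ ∀ {L β : ℝ}, 0 < L → 0 < β → ∀ {α γ : Fin 3 → ℕ}, ∑ i, (α i + γ i) = 2 →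
      ∀ {x y : Fin 3 → ℝ}, (∀ i, x i ∈ Set.Ioo (-(L / 2)) (L / 2)) →
        (∀ i, y i ∈ Set.Ioo (-(L / 2)) (L / 2)) →
          |kernelProd (dirichletKernel L) α γ β x y - kernelProd freeKernel α γ β x y| ≤
            c * β⁻¹ * G0inf x y (4 * β) := by
  obtain ⟨A, hA, dirichlet_le⟩ := exists_hasGaussianBounds_dirichletKernel
  obtain ⟨B, hB, free_le⟩ := exists_hasGaussianBounds_freeKernel
  refine ⟨(A ^ 3 + B ^ 3) * (8 * π) ^ (3/2 : ℝ), by positivity,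
    fun {L β} hL hβ {α γ} hαγ {x y} hx hy => ?_⟩
  calc _ ≤ _ := (abs_sub _ _).trans (add_le_add
        (abs_kernelProd_le_G0inf (dirichlet_le hL) hβ hαγ hx hy)
        (abs_kernelProd_le_G0inf free_le hβ hαγ (fun _ => Set.mem_univ _) fun _ => Set.mem_univ _))
    _ = _ := by ring

lemma mul_inv_mul_G0inf_le {c₁ c₂ : ℝ} (hc₁ : 0 ≤ c₁) (hc₂ : 0 ≤ c₂) (hβ : 0 ≤ β)
    (x y : Fin 3 → ℝ) :
    c₁ * β⁻¹ * G0inf x y (c₂ * β) ≤ c₁ * (1 + β) * β⁻¹ * G0inf x y (c₂ * β) := by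
  have hnonneg : 0 ≤ G0inf x y (c₂ * β) := by
    unfold G0inf
    positivity
  gcongr
  exact le_mul_of_one_le_right hc₁ (by linarith)

end Cube

theorem stmt_12_general :
    ∃ c₁ c₂ : ℝ, 0 < c₁ ∧ 0 < c₂ ∧
      ∀ (L β : ℝ) (x x' : Fin 3 → ℝ) (j k : Fin 3), 0 < β →
        (∀ i, x i ∈ Set.Ioo (-(L / 2)) (L / 2)) →
        (∀ i, x' i ∈ Set.Ioo (-(L / 2)) (L / 2)) →
          |deriv (fun b : ℝ => Z0L L x x' b) β| ≤ c₁ * β⁻¹ * G0inf x x' (c₂ * β) ∧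
          |deriv (fun t : ℝ => deriv
              (fun s : ℝ => Z0L L (Function.update x j t) (Function.update x' k s) β)
              (x' k)) (x j)| ≤ c₁ * β⁻¹ * G0inf x x' (c₂ * β) := by
  obtain ⟨c, hc, order_two_le⟩ := exists_abs_kernelProd_dirichletKernel_sub_freeKernel_le
  refine ⟨3 * c, 4, by positivity, by norm_num, fun L β x x' j k hβ hx hx' => ?_⟩
  have hL : 0 < L := by linarith [(hx 0).1, (hx 0).2]
  have htime (i : Fin 3) := order_two_le hL hβ (α := Pi.single i 2) (γ := 0) (by simp) hx hx'
  have hmixed := order_two_le hL hβ (α := Pi.single j 1) (γ := Pi.single k 1)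
    (by simp [Finset.sum_add_distrib]) hx hx'
  have hnonneg := (abs_nonneg _).trans hmixed
  rw [deriv_Z0L_time hL hβ, deriv_deriv_Z0L hL hβ]
  refine ⟨?_, by linarith⟩
  calc _ ≤ ∑ _j : Fin 3, c * β⁻¹ * G0inf x x' (4 * β) := by
        refine (Finset.abs_sum_le_sum_abs _ _).trans (Finset.sum_le_sum fun i _ => ?_)
        rw [abs_div, abs_two]
        exact (half_le_self (abs_nonneg _)).trans (htime i)
    _ = _ := by simp [mul_assoc]

/-- Gaussian bounds for `∂Z_{0,L}/∂β` and for the mixed second derivatives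
`∂²Z_{0,L}/∂x_j ∂x'_k`: both are bounded by `c₁ (1+β) β^{-1} G_{0,∞}(x, x'; c₂ β)`. -/
theorem stmt_12 :
    ∃ c₁ c₂ : ℝ, 0 < c₁ ∧ 0 < c₂ ∧
      ∀ (L β : ℝ) (x x' : Fin 3 → ℝ) (j k : Fin 3), 1 ≤ L → 0 < β →
        (∀ i, x i ∈ Set.Ioo (-(L / 2)) (L / 2)) →
        (∀ i, x' i ∈ Set.Ioo (-(L / 2)) (L / 2)) →
          |deriv (fun b : ℝ => Z0L L x x' b) β|
              ≤ c₁ * (1 + β) * β⁻¹ * G0inf x x' (c₂ * β) ∧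
          |deriv (fun t : ℝ => deriv
              (fun s : ℝ => Z0L L (Function.update x j t) (Function.update x' k s) β)
              (x' k)) (x j)|
              ≤ c₁ * (1 + β) * β⁻¹ * G0inf x x' (c₂ * β) := by
  obtain ⟨c₁, c₂, hc₁, hc₂, hbound⟩ := stmt_12_general
  exact ⟨c₁, c₂, hc₁, hc₂, fun L β x x' j k _ hβ hx hx' =>
    (hbound L β x x' j k hβ hx hx').imp (·.trans (mul_inv_mul_G0inf_le hc₁.le hc₂.le hβ.le x x'))
      (·.trans (mul_inv_mul_G0inf_le hc₁.le hc₂.le hβ.le x x'))⟩
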